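/- arXiv:1503.05901 — 2 statements merged into one kernel-verified Lean document; each statement's English description precedes it below -/
import Mathlib

section
/- Let (a_i)_{i≥1} be a π-periodic sequence of real numbers and let c1 > 0. Then there exists an index i ∈ {1,…,π} such that i + nπ is a c1-Pliss time for (a_i) for every integer n ≥ 0 if, and only if, Σ_{i=1}^{π} a_i ≥ c1·π. -/
/-- `m ≥ 1` is a `c`-Pliss time for the sequence `a` (indexed from `1`):
`∑_{i=k+1}^{m} a i ≥ c·(m-k)` for every `k = 0, 1, …, m-1`. -/
def PlissTime (a : ℕ → ℝ) (c : ℝ) (m : ℕ) : Prop :=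
  1 ≤ m ∧ ∀ k < m, c * ((m : ℝ) - (k : ℝ)) ≤ ∑ i ∈ Finset.Icc (k + 1) m, a i

/-!
Let `S m = ∑_{i=1}^{m} (a i - c)`. A time `m ≥ 1` is a `c`-Pliss time exactly when `S m` is at
least every earlier value of `S`, and periodicity of `a` means that `S` grows by the constant `S π`
over each period. If some `m + π` is a Pliss time, then `S m ≤ S (m + π) = S m + S π`, so `S π ≥ 0`.
Conversely, if `S π ≥ 0`, a maximizer `i` of `S` on `{1, …, π}` is a maximizer on `{0, …, π}`, and
translating by periods shows that `i + n π` maximizes `S` on `{0, …, (n + 1) π}`.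
-/

open Finset
open scoped AddConstMap

theorem exists_mem_Icc_one_forall_le_apply {α : Type*} [LinearOrder α] {f : ℕ → α} {p : ℕ}
    (hp : 1 ≤ p) (h : f 0 ≤ f p) : ∃ i ∈ Icc 1 p, ∀ k ≤ p, f k ≤ f i := by
  obtain ⟨i, hi, hmax⟩ := exists_max_image (Icc 1 p) f (nonempty_Icc.mpr hp)
  refine ⟨i, hi, fun k hk ↦ ?_⟩
  rcases k.eq_zero_or_pos with rfl | hk_pos
  · exact h.trans (hmax p (right_mem_Icc.mpr hp))
  · exact hmax k (mem_Icc.mpr ⟨hk_pos, hk⟩)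

theorem forall_le_apply_add_mul_of_forall_le {G : Type*} [AddCommMonoid G] [Preorder G]
    [IsOrderedAddMonoid G] {p : ℕ} {d : G} (f : ℕ →+c[p, d] G) (hd : 0 ≤ d) {i : ℕ}
    (hi : ∀ k ≤ p, f k ≤ f i) (n : ℕ) : ∀ k ≤ (n + 1) * p, f k ≤ f (i + n * p) := by
  induction n with
  | zero => simpa using hi
  | succ n ih =>
    intro k hk
    rcases le_total k p with hkp | hpk
    · calc
        f k ≤ f i := hi k hkp
        _ ≤ f i + (n + 1) • d := le_add_of_nonneg_right (nsmul_nonneg hd _)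
        _ = f (i + (n + 1) * p) := by
          rw [← smul_eq_mul, AddConstMapClass.map_add_nsmul]
    · obtain ⟨j, rfl⟩ := Nat.exists_eq_add_of_le' hpk
      have hj : j ≤ (n + 1) * p := by linarith
      calc
        f (j + p) = f j + d := AddConstMapClass.map_add_const f j
        _ ≤ f (i + n * p) + d := by gcongr; exact ih j hj
        _ = f (i + (n + 1) * p) := by
          rw [← AddConstMapClass.map_add_const f, add_assoc, ← Nat.succ_mul]

/-- The partial sum `∑_{i=1}^{m} (a i - c)`, with the constant part summed. It turns the Pliss
condition at `m` into a comparison of its value at `m` with its earlier values. -/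
def plissExcess (a : ℕ → ℝ) (c : ℝ) (m : ℕ) : ℝ :=
  ∑ i ∈ Icc 1 m, a i - c * m

section PlissTime

variable {a : ℕ → ℝ} {c : ℝ} {m π : ℕ}

theorem plissExcess_zero (a : ℕ → ℝ) (c : ℝ) : plissExcess a c 0 = 0 := by
  simp [plissExcess]

theorem plissExcess_succ (a : ℕ → ℝ) (c : ℝ) (m : ℕ) :
    plissExcess a c (m + 1) = plissExcess a c m + (a (m + 1) - c) := by
  rw [plissExcess, plissExcess, sum_Icc_succ_top (Nat.le_add_left 1 m)]
  push_cast
  ring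

theorem plissExcess_nonneg_iff : 0 ≤ plissExcess a c m ↔ c * m ≤ ∑ i ∈ Icc 1 m, a i :=
  sub_nonneg

theorem plissExcess_sub_plissExcess (a : ℕ → ℝ) (c : ℝ) {k m : ℕ} (hkm : k ≤ m) :
    plissExcess a c m - plissExcess a c k = ∑ i ∈ Icc (k + 1) m, a i - c * (m - k) := by
  have hsum : ∑ i ∈ Icc 1 k, a i + ∑ i ∈ Icc (k + 1) m, a i = ∑ i ∈ Icc 1 m, a i := by
    simpa only [← Icc_add_one_left_eq_Ioc, zero_add] using sum_Ioc_consecutive a k.zero_le hkm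
  rw [plissExcess, plissExcess, ← hsum]
  ring

theorem plissTime_iff_plissExcess_le :
    PlissTime a c m ↔ 1 ≤ m ∧ ∀ k < m, plissExcess a c k ≤ plissExcess a c m := by
  refine and_congr_right fun _ ↦ forall₂_congr fun k hk ↦ ?_
  rw [← sub_nonneg, ← plissExcess_sub_plissExcess a c hk.le, sub_nonneg]

theorem plissExcess_add_period (hper : ∀ i, 1 ≤ i → a (i + π) = a i) (c : ℝ) (m : ℕ) :
    plissExcess a c (m + π) = plissExcess a c m + plissExcess a c π := by
  induction m with
  | zero => rw [Nat.zero_add, plissExcess_zero, zero_add]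
  | succ m ih =>
    have ha : a (m + π + 1) = a (m + 1) := by
      rw [add_right_comm, hper (m + 1) (Nat.le_add_left 1 m)]
    rw [add_right_comm m 1 π, plissExcess_succ, plissExcess_succ, ih, ha, add_right_comm]

theorem PlissTime.le_sum_of_add_period (hper : ∀ i, 1 ≤ i → a (i + π) = a i) (hπ : 1 ≤ π)
    (h : PlissTime a c (m + π)) : c * π ≤ ∑ i ∈ Icc 1 π, a i := by
  have hle := (plissTime_iff_plissExcess_le.mp h).2 m (Nat.lt_add_of_pos_right hπ)
  rw [plissExcess_add_period hper, le_add_iff_nonneg_right] at hle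
  exact plissExcess_nonneg_iff.mp hle

theorem exists_forall_plissTime_of_le_sum (hper : ∀ i, 1 ≤ i → a (i + π) = a i) (hπ : 1 ≤ π)
    (h : c * π ≤ ∑ i ∈ Icc 1 π, a i) :
    ∃ i, 1 ≤ i ∧ i ≤ π ∧ ∀ n : ℕ, PlissTime a c (i + n * π) := by
  have hπ_nonneg : 0 ≤ plissExcess a c π := plissExcess_nonneg_iff.mpr h
  let S : ℕ →+c[π, plissExcess a c π] ℝ := ⟨plissExcess a c, plissExcess_add_period hper c⟩
  obtain ⟨i, hi, hmax⟩ := exists_mem_Icc_one_forall_le_apply (f := S) hπ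
    ((plissExcess_zero a c).trans_le hπ_nonneg)
  obtain ⟨hi_one, hi_le⟩ := mem_Icc.mp hi
  refine ⟨i, hi_one, hi_le, fun n ↦ plissTime_iff_plissExcess_le.mpr
    ⟨Nat.le_add_right_of_le hi_one, fun k hk ↦ ?_⟩⟩
  exact forall_le_apply_add_mul_of_forall_le S hπ_nonneg hmax n k (by linarith)

end PlissTime

theorem ultimate_pliss_time_iff_general (π : ℕ) (hπ : 1 ≤ π) (a : ℕ → ℝ)
    (hper : ∀ i, 1 ≤ i → a (i + π) = a i) (c : ℝ) :
    (∃ i, 1 ≤ i ∧ i ≤ π ∧ ∀ n : ℕ, PlissTime a c (i + n * π)) ↔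
      c * (π : ℝ) ≤ ∑ i ∈ Icc 1 π, a i := by
  refine ⟨?_, exists_forall_plissTime_of_le_sum hper hπ⟩
  rintro ⟨i, -, -, hi⟩
  exact PlissTime.le_sum_of_add_period hper hπ (by simpa only [one_mul] using hi 1)

/-- For a `π`-periodic sequence `a` and `c1 > 0`, there exists `i ∈ {1,…,π}` such that
`i + n·π` is a `c1`-Pliss time for every `n ≥ 0` if, and only if, `∑_{i=1}^{π} a i ≥ c1·π`. -/
theorem ultimate_pliss_time_iff (π : ℕ) (hπ : 1 ≤ π) (a : ℕ → ℝ)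
    (hper : ∀ i, 1 ≤ i → a (i + π) = a i) (c1 : ℝ) (hc1 : 0 < c1) :
    (∃ i, 1 ≤ i ∧ i ≤ π ∧ ∀ n : ℕ, PlissTime a c1 (i + n * π)) ↔
      c1 * (π : ℝ) ≤ ∑ i ∈ Finset.Icc 1 π, a i :=
  ultimate_pliss_time_iff_general π hπ a hper c1
end

section
/- Let A ≥ c2 > c1 > 0 be real numbers and set θ = (c2 − c1)/(A − c1). Let (a_i)_{i≥1} be a π-periodic sequence of real numbers with a_i ≤ A for every i ≥ 1, and suppose {1,…,π} is partitioned as I0 ∪ J0 with I0 nonempty, such that a_i ≥ c1 for every i ∈ J0 and (1/card I0)·Σ_{i∈I0} a_i ≥ c1. Then there exists an ultimate c1-Pliss time i ∈ I0 for (a_i). Moreover, if (1/card I0)·Σ_{i∈I0} a_i ≥ c2, then there are at least θ·card(I0) ultimate c1-Pliss times i ∈ I0 for (a_i). -/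
/-!
Let `a` have period `p` and let `S m = ∑_{1 ≤ i ≤ m} (a i - c)`; then `m ≥ 1` is a `c`-Pliss time
iff `S` attains at `m` its maximum over `{0, …, m}`. Since `S (m + p) = S m + S p`, when `0 ≤ S p`
the ultimate Pliss times are the `i` for which `i + p` is such a record. The running maximum of `S`
grows by at least `S p` over the period from `p` to `2p`, it moves only at records, and at a record
`m` it moves by at most `a m - c`; hence `∑_{i ≤ p} (a i - c)` is at most the same sum over the
ultimate Pliss times alone.

To force the Pliss times into `I0`, lower `a` to `c` off `I0`: this creates no new Pliss time, and
the remaining ultimate Pliss times off `I0` contribute `0` to the sum. If the average over `I0` is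
exactly `c` the count may give nothing, but a maximiser of `S` on `I0` is still ultimate, because
`S` does not increase off `I0`.
-/

/-- The partial sums of `a - c`, measuring how far `a` is above the average `c` up to time `m`.
The index starts at `1`, as in `PlissTime`. -/
def excess (a : ℕ → ℝ) (c : ℝ) (m : ℕ) : ℝ :=
  ∑ i ∈ Finset.Icc 1 m, (a i - c)

/-- `i` is an ultimate `c`-Pliss time of a `p`-periodic sequence. The restriction of `i` to
`{1, …, p}` is left to the places where the notion is used. -/
def UltimatePlissTime (a : ℕ → ℝ) (c : ℝ) (p i : ℕ) : Prop :=
  ∀ n : ℕ, PlissTime a c (i + n * p)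

/-- The sequence `a` with the value `c` put at every index whose representative in `{1, …, p}`
modulo `p` lies outside `I`; it serves to discard the indices outside `I`. The representative is
written `(i - 1) % p + 1`, so the irrelevant index `0` is treated like `1`. -/
def flattenOff (a : ℕ → ℝ) (c : ℝ) (p : ℕ) (I : Finset ℕ) (i : ℕ) : ℝ :=
  if (i - 1) % p + 1 ∈ I then a i else c

section PlissTime

variable {a b : ℕ → ℝ} {c : ℝ} {k m : ℕ}

theorem excess_zero (a : ℕ → ℝ) (c : ℝ) : excess a c 0 = 0 := by
  simp [excess]

theorem excess_add_one (a : ℕ → ℝ) (c : ℝ) (m : ℕ) :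
    excess a c (m + 1) = excess a c m + (a (m + 1) - c) :=
  Finset.sum_Icc_succ_top (by omega) _

theorem sum_Icc_eq_excess_sub_excess (a : ℕ → ℝ) (c : ℝ) (hkm : k ≤ m) :
    ∑ i ∈ Finset.Icc (k + 1) m, a i = excess a c m - excess a c k + c * ((m : ℝ) - k) := by
  induction m, hkm using Nat.le_induction with
  | base => simp
  | succ m hkm ih =>
    rw [Finset.sum_Icc_succ_top (by omega), ih, excess_add_one]
    push_cast
    ring

theorem plissTime_iff_excess_le :
    PlissTime a c m ↔ 1 ≤ m ∧ ∀ k ≤ m, excess a c k ≤ excess a c m := by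
  refine and_congr_right fun _ ↦ ⟨fun h k hk ↦ ?_, fun h k hk ↦ ?_⟩
  · obtain rfl | hlt := hk.eq_or_lt
    · rfl
    · linarith [h k hlt, sum_Icc_eq_excess_sub_excess a c hk]
  · linarith [h k hk.le, sum_Icc_eq_excess_sub_excess a c hk.le]

theorem PlissTime.mono (hba : ∀ i, 1 ≤ i → b i ≤ a i) (h : PlissTime b c m) : PlissTime a c m :=
  ⟨h.1, fun k hk ↦ (h.2 k hk).trans <| Finset.sum_le_sum fun i hi ↦
    hba i ((Nat.le_add_left 1 k).trans (Finset.mem_Icc.1 hi).1)⟩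

theorem PlissTime.le_apply (h : PlissTime a c m) : c ≤ a m := by
  obtain ⟨m, rfl⟩ := Nat.exists_eq_add_of_le' h.1
  have := (plissTime_iff_excess_le.1 h).2 m (Nat.le_succ m)
  linarith [excess_add_one a c m]

open Classical in
theorem partialSups_excess_add_one_le (a : ℕ → ℝ) (c : ℝ) (m : ℕ) :
    partialSups (excess a c) (m + 1) ≤
      partialSups (excess a c) m + if PlissTime a c (m + 1) then a (m + 1) - c else 0 := by
  have hle : excess a c m ≤ partialSups (excess a c) m := le_partialSups _ m
  rw [partialSups_add_one]
  split_ifs with h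
  · have hc := h.le_apply
    exact sup_le (by linarith) (by linarith [excess_add_one a c m])
  · obtain ⟨k, hk, hlt⟩ : ∃ k ≤ m + 1, excess a c (m + 1) < excess a c k := by
      simpa [plissTime_iff_excess_le] using h
    have hkm : k ≤ m := Nat.le_of_lt_succ (hk.lt_of_ne fun he ↦ hlt.ne' (congrArg _ he))
    rw [add_zero]
    exact sup_le le_rfl (hlt.le.trans (le_partialSups_of_le _ hkm))

open Classical in
theorem partialSups_excess_add_le (a : ℕ → ℝ) (c : ℝ) (m n : ℕ) :
    partialSups (excess a c) (n + m) ≤ partialSups (excess a c) m +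
      ∑ i ∈ Finset.Icc 1 n, if PlissTime a c (i + m) then a (i + m) - c else 0 := by
  induction n with
  | zero => simp
  | succ n ih =>
    have hstep := partialSups_excess_add_one_le a c (n + m)
    rw [Nat.add_right_comm] at hstep
    rw [Finset.sum_Icc_succ_top (by omega)]
    linarith

end PlissTime

section Periodic

variable {a : ℕ → ℝ} {c : ℝ} {p i m : ℕ} {I : Finset ℕ}

theorem UltimatePlissTime.plissTime (h : UltimatePlissTime a c p i) : PlissTime a c i := by
  simpa using h 0

theorem excess_add_period (hper : ∀ i, 1 ≤ i → a (i + p) = a i) (m : ℕ) :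
    excess a c (m + p) = excess a c m + excess a c p := by
  induction m with
  | zero => simp [excess_zero]
  | succ m ih =>
    rw [Nat.add_right_comm, excess_add_one, excess_add_one, ih, Nat.add_right_comm,
      hper _ (by omega)]
    ring

theorem PlissTime.of_add_period (hper : ∀ i, 1 ≤ i → a (i + p) = a i)
    (h : PlissTime a c (m + p)) (hm : 1 ≤ m) : PlissTime a c m := by
  refine plissTime_iff_excess_le.2 ⟨hm, fun k hk ↦ ?_⟩
  have := (plissTime_iff_excess_le.1 h).2 (k + p) (by omega)
  simpa only [excess_add_period hper, add_le_add_iff_right] using this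

theorem PlissTime.add_period (hper : ∀ i, 1 ≤ i → a (i + p) = a i) (hD : 0 ≤ excess a c p)
    (h : PlissTime a c m) (hpm : p ≤ m) : PlissTime a c (m + p) := by
  obtain ⟨hm, hmax⟩ := plissTime_iff_excess_le.1 h
  refine plissTime_iff_excess_le.2 ⟨by omega, fun k hk ↦ ?_⟩
  rw [excess_add_period hper]
  obtain hkp | hpk := le_total k p
  · linarith [hmax k (hkp.trans hpm)]
  · obtain ⟨j, rfl⟩ := Nat.exists_eq_add_of_le' hpk
    rw [excess_add_period hper]
    linarith [hmax j (by omega)]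

theorem ultimatePlissTime_of_add_period (hper : ∀ i, 1 ≤ i → a (i + p) = a i)
    (hD : 0 ≤ excess a c p) (hi : 1 ≤ i) (h : PlissTime a c (i + p)) :
    UltimatePlissTime a c p i
  | 0 => by simpa using h.of_add_period hper hi
  | n + 1 => by
    induction n with
    | zero => simpa using h
    | succ n ih =>
      rw [Nat.succ_mul (n + 1), ← add_assoc]
      exact ih.add_period hper hD (by rw [Nat.succ_mul]; omega)

open Classical in
theorem excess_le_sum_sub_ultimatePlissTime (hper : ∀ i, 1 ≤ i → a (i + p) = a i)
    (hD : 0 ≤ excess a c p) :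
    excess a c p ≤ ∑ i ∈ Finset.Icc 1 p with UltimatePlissTime a c p i, (a i - c) := by
  have hgrow : partialSups (excess a c) p + excess a c p ≤ partialSups (excess a c) (p + p) := by
    rw [← le_sub_iff_add_le]
    refine partialSups_le _ _ _ fun k hk ↦ ?_
    rw [le_sub_iff_add_le, ← excess_add_period hper]
    exact le_partialSups_of_le _ (by omega)
  have hult : ∀ i ∈ Finset.Icc 1 p,
      (if PlissTime a c (i + p) then a (i + p) - c else 0) =
        if UltimatePlissTime a c p i then a i - c else 0 := fun i hi ↦ by
    have hi1 := (Finset.mem_Icc.1 hi).1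
    have hiff : PlissTime a c (i + p) ↔ UltimatePlissTime a c p i :=
      ⟨ultimatePlissTime_of_add_period hper hD hi1, fun h ↦ by simpa using h 1⟩
    simp only [hiff, hper i hi1]
  have hrecords := partialSups_excess_add_le a c p p
  rw [Finset.sum_congr rfl hult, ← Finset.sum_filter] at hrecords
  linarith

theorem exists_mem_ultimatePlissTime_of_apply_le (hper : ∀ i, 1 ≤ i → a (i + p) = a i)
    (hI : I ⊆ Finset.Icc 1 p) (hne : I.Nonempty) (hoff : ∀ i ∈ Finset.Icc 1 p \ I, a i ≤ c)
    (hD : 0 ≤ excess a c p) : ∃ i ∈ I, UltimatePlissTime a c p i := by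
  obtain ⟨i, hiI, hmax⟩ := Finset.exists_max_image I (excess a c) hne
  obtain ⟨hi1, hip⟩ := Finset.mem_Icc.1 (hI hiI)
  refine ⟨i, hiI, ultimatePlissTime_of_add_period hper hD hi1 <|
    plissTime_iff_excess_le.2 ⟨by omega, fun k hk ↦ ?_⟩⟩
  rw [excess_add_period hper]
  have hmax_or_descent : ∀ j, 1 ≤ j → j ≤ p → excess a c j ≤ excess a c i ∨ a j ≤ c :=
    fun j hj1 hjp ↦ (em (j ∈ I)).imp (hmax j) fun hj ↦
      hoff j (Finset.mem_sdiff.2 ⟨Finset.mem_Icc.2 ⟨hj1, hjp⟩, hj⟩)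
  have hwindow : ∀ k, i ≤ k → k ≤ i + p → excess a c k ≤ excess a c i + excess a c p := by
    intro k hik
    induction k, hik using Nat.le_induction with
    | base => exact fun _ ↦ le_add_of_nonneg_right hD
    | succ k hik ih =>
      intro hk
      have hprev := ih (by omega)
      have hstep := excess_add_one a c k
      obtain hkp | hpk := Nat.lt_or_ge k p
      · rcases hmax_or_descent (k + 1) (by omega) hkp with h | h <;> linarith
      · obtain ⟨j, rfl⟩ := Nat.exists_eq_add_of_le' hpk
        rw [Nat.add_right_comm] at hstep ⊢
        have hshift := excess_add_period (c := c) hper (j + 1)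
        have haj := hper (j + 1) (by omega)
        rcases hmax_or_descent (j + 1) (by omega) (by omega) with h | h <;> linarith
  obtain hki | hik := le_total k i
  · have := hwindow (k + p) (by omega) (by omega)
    rw [excess_add_period hper] at this
    linarith
  · exact hwindow k hik hk

end Periodic

section FlattenOff

variable {a : ℕ → ℝ} {c : ℝ} {p i : ℕ} {I : Finset ℕ}

theorem flattenOff_of_mem_Icc (hi : i ∈ Finset.Icc 1 p) :
    flattenOff a c p I i = if i ∈ I then a i else c := by
  obtain ⟨hi1, hip⟩ := Finset.mem_Icc.1 hi
  rw [flattenOff, Nat.mod_eq_of_lt (by omega), Nat.sub_add_cancel hi1]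

theorem flattenOff_add_period (hper : ∀ i, 1 ≤ i → a (i + p) = a i) (i : ℕ) (hi : 1 ≤ i) :
    flattenOff a c p I (i + p) = flattenOff a c p I i := by
  rw [flattenOff, flattenOff, hper i hi, Nat.sub_add_comm hi, Nat.add_mod_right]

theorem apply_sub_one_mod_add_one (hper : ∀ i, 1 ≤ i → a (i + p) = a i) (hi : 1 ≤ i) :
    a ((i - 1) % p + 1) = a i := by
  have hshift : Function.Periodic (fun j ↦ a (j + 1)) p := fun j ↦ by
    simpa only [Nat.add_right_comm] using hper (j + 1) (Nat.le_add_left 1 j)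
  rw [hshift.map_mod_nat (i - 1), Nat.sub_add_cancel hi]

theorem flattenOff_le (hp : 0 < p) (hper : ∀ i, 1 ≤ i → a (i + p) = a i)
    (hoff : ∀ i ∈ Finset.Icc 1 p \ I, c ≤ a i) (i : ℕ) (hi : 1 ≤ i) :
    flattenOff a c p I i ≤ a i := by
  rw [flattenOff]
  split_ifs with h
  · rfl
  · rw [← apply_sub_one_mod_add_one hper hi]
    have hlt := Nat.mod_lt (i - 1) hp
    exact hoff _ (Finset.mem_sdiff.2 ⟨Finset.mem_Icc.2 ⟨by omega, hlt⟩, h⟩)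

theorem UltimatePlissTime.of_flattenOff (hp : 0 < p) (hper : ∀ i, 1 ≤ i → a (i + p) = a i)
    (hoff : ∀ i ∈ Finset.Icc 1 p \ I, c ≤ a i)
    (h : UltimatePlissTime (flattenOff a c p I) c p i) : UltimatePlissTime a c p i :=
  fun n ↦ (h n).mono (flattenOff_le hp hper hoff)

theorem excess_flattenOff (hI : I ⊆ Finset.Icc 1 p) :
    excess (flattenOff a c p I) c p = ∑ i ∈ I, (a i - c) := by
  have hterm : ∀ i ∈ Finset.Icc 1 p,
      flattenOff a c p I i - c = if i ∈ I then a i - c else 0 := fun i hi ↦ by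
    rw [flattenOff_of_mem_Icc hi]
    split_ifs <;> simp
  rw [excess, Finset.sum_congr rfl hterm, Finset.sum_ite_mem, Finset.inter_eq_right.2 hI]

end FlattenOff

section Subset

variable {a : ℕ → ℝ} {c : ℝ} {p : ℕ} {I : Finset ℕ}

theorem exists_mem_ultimatePlissTime_of_le_apply (hper : ∀ i, 1 ≤ i → a (i + p) = a i)
    (hI : I ⊆ Finset.Icc 1 p) (hne : I.Nonempty) (hoff : ∀ i ∈ Finset.Icc 1 p \ I, c ≤ a i)
    (hsum : 0 ≤ ∑ i ∈ I, (a i - c)) : ∃ i ∈ I, UltimatePlissTime a c p i := by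
  have hp : 0 < p := Finset.nonempty_Icc.1 (hne.mono hI)
  have hflat : ∀ i ∈ Finset.Icc 1 p \ I, flattenOff a c p I i ≤ c := fun i hi ↦ by
    obtain ⟨hip, hiI⟩ := Finset.mem_sdiff.1 hi
    rw [flattenOff_of_mem_Icc hip, if_neg hiI]
  obtain ⟨i, hiI, hi⟩ := exists_mem_ultimatePlissTime_of_apply_le (flattenOff_add_period hper) hI
    hne hflat (hsum.trans_eq (excess_flattenOff hI).symm)
  exact ⟨i, hiI, hi.of_flattenOff hp hper hoff⟩

open Classical in
theorem sum_sub_le_sum_sub_ultimatePlissTime (hper : ∀ i, 1 ≤ i → a (i + p) = a i)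
    (hI : I ⊆ Finset.Icc 1 p) (hoff : ∀ i ∈ Finset.Icc 1 p \ I, c ≤ a i)
    (hsum : 0 ≤ ∑ i ∈ I, (a i - c)) :
    ∑ i ∈ I, (a i - c) ≤ ∑ i ∈ I with UltimatePlissTime a c p i, (a i - c) := by
  obtain rfl | hne := I.eq_empty_or_nonempty
  · simp
  have hp : 0 < p := Finset.nonempty_Icc.1 (hne.mono hI)
  set b := flattenOff a c p I
  have hterm : ∀ i ∈ Finset.Icc 1 p, (if UltimatePlissTime b c p i then b i - c else 0) ≤
      if i ∈ I then (if UltimatePlissTime a c p i then a i - c else 0) else 0 := fun i hi ↦ by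
    have hbi : b i = if i ∈ I then a i else c := flattenOff_of_mem_Icc hi
    have hmono : UltimatePlissTime b c p i → UltimatePlissTime a c p i := fun h ↦
      h.of_flattenOff hp hper hoff
    have hnonneg : UltimatePlissTime a c p i → 0 ≤ a i - c := fun h ↦
      sub_nonneg.2 h.plissTime.le_apply
    rw [hbi]
    grind
  calc ∑ i ∈ I, (a i - c)
      = excess b c p := (excess_flattenOff hI).symm
    _ ≤ ∑ i ∈ Finset.Icc 1 p with UltimatePlissTime b c p i, (b i - c) :=
      excess_le_sum_sub_ultimatePlissTime (flattenOff_add_period hper)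
        (hsum.trans_eq (excess_flattenOff hI).symm)
    _ ≤ ∑ i ∈ Finset.Icc 1 p,
          if i ∈ I then (if UltimatePlissTime a c p i then a i - c else 0) else 0 := by
      rw [Finset.sum_filter]
      exact Finset.sum_le_sum hterm
    _ = ∑ i ∈ I with UltimatePlissTime a c p i, (a i - c) := by
      rw [Finset.sum_ite_mem, Finset.inter_eq_right.2 hI, Finset.sum_filter]

end Subset

theorem ultimate_pliss_times_in_I0_general {A c1 c2 : ℝ} (hA : c1 < A) {π : ℕ} {a : ℕ → ℝ}
    (hper : ∀ i, 1 ≤ i → a (i + π) = a i) {I0 J0 : Finset ℕ}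
    (hunion : I0 ∪ J0 = Finset.Icc 1 π) (hI0 : I0.Nonempty) (ha : ∀ i ∈ I0, a i ≤ A)
    (hJ0 : ∀ i ∈ J0, c1 ≤ a i) (havg : c1 * (I0.card : ℝ) ≤ ∑ i ∈ I0, a i) :
    (∃ i ∈ I0, UltimatePlissTime a c1 π i) ∧
    (c2 * (I0.card : ℝ) ≤ ∑ i ∈ I0, a i →
      ((c2 - c1) / (A - c1)) * (I0.card : ℝ) ≤
        ({i | i ∈ I0 ∧ UltimatePlissTime a c1 π i} : Set ℕ).ncard) := by
  classical
  have hI : I0 ⊆ Finset.Icc 1 π := hunion ▸ Finset.subset_union_left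
  have hoff : ∀ i ∈ Finset.Icc 1 π \ I0, c1 ≤ a i := fun i hi ↦ hJ0 i (by grind)
  have hsum : ∑ i ∈ I0, (a i - c1) = ∑ i ∈ I0, a i - c1 * I0.card := by
    rw [Finset.sum_sub_distrib, Finset.sum_const, nsmul_eq_mul, mul_comm]
  have hnonneg : 0 ≤ ∑ i ∈ I0, (a i - c1) := hsum ▸ sub_nonneg.2 havg
  refine ⟨exists_mem_ultimatePlissTime_of_le_apply hper hI hI0 hoff hnonneg, fun hc2 ↦ ?_⟩
  rw [← Finset.coe_filter, Set.ncard_coe_finset, div_mul_eq_mul_div, div_le_iff₀ (sub_pos.2 hA)]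
  calc (c2 - c1) * (I0.card : ℝ)
      ≤ ∑ i ∈ I0, (a i - c1) := by linarith
    _ ≤ ∑ i ∈ I0 with UltimatePlissTime a c1 π i, (a i - c1) :=
      sum_sub_le_sum_sub_ultimatePlissTime hper hI hoff hnonneg
    _ ≤ (I0.filter (UltimatePlissTime a c1 π)).card * (A - c1) := by
      rw [← nsmul_eq_mul]
      exact Finset.sum_le_card_nsmul _ _ _ fun i hi ↦
        sub_le_sub_right (ha i (Finset.mem_filter.1 hi).1) c1

/-- Let `A ≥ c2 > c1 > 0`, `θ = (c2-c1)/(A-c1)`, and let `a` be a `π`-periodic sequence with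
`a i ≤ A`. Suppose `{1,…,π}` is partitioned as `I0 ∪ J0` with `I0` nonempty, `a i ≥ c1` on
`J0`, and the average of `a` over `I0` is at least `c1`. Then there is an ultimate
`c1`-Pliss time `i ∈ I0` (i.e. `i + n·π` is a `c1`-Pliss time for every `n ≥ 0`); moreover,
if the average of `a` over `I0` is at least `c2`, there are at least `θ·card I0` many
ultimate `c1`-Pliss times in `I0`. -/
theorem ultimate_pliss_times_in_I0 (A c1 c2 : ℝ) (hA : c2 ≤ A) (h21 : c1 < c2) (h1 : 0 < c1)
    (π : ℕ) (hπ : 1 ≤ π) (a : ℕ → ℝ) (ha : ∀ i, 1 ≤ i → a i ≤ A)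
    (hper : ∀ i, 1 ≤ i → a (i + π) = a i)
    (I0 J0 : Finset ℕ) (hdisj : Disjoint I0 J0) (hunion : I0 ∪ J0 = Finset.Icc 1 π)
    (hI0 : I0.Nonempty) (hJ0 : ∀ i ∈ J0, c1 ≤ a i)
    (havg : c1 * (I0.card : ℝ) ≤ ∑ i ∈ I0, a i) :
    (∃ i ∈ I0, ∀ n : ℕ, PlissTime a c1 (i + n * π)) ∧
    (c2 * (I0.card : ℝ) ≤ ∑ i ∈ I0, a i →
      ((c2 - c1) / (A - c1)) * (I0.card : ℝ) ≤
        (({i | i ∈ I0 ∧ ∀ n : ℕ, PlissTime a c1 (i + n * π)} : Set ℕ).ncard : ℝ)) := by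
  exact ultimate_pliss_times_in_I0_general (h21.trans_le hA) hper hunion hI0
    (fun i hi ↦ ha i (Finset.mem_Icc.1 (hunion ▸ Finset.mem_union_left J0 hi)).1) hJ0 havg
end
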